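/- arXiv:1403.2852 — 2 statements merged into one kernel-verified Lean document; each statement's English description precedes it below -/
import Mathlib

section
/- Let X be a weak solution of the dyadic model with initial condition x ∈ H that satisfies the energy inequality on [0,T], and for n≥1 set F_n(t) = ∑_{i≥n} X_i(t)². Then for every n≥1 and t∈[0,T], F_n(t) ≤ F_n(0) + ∫_0^t 2 φ_{n-1} k_{n-1} X_{n-1}(s)² X_n(s) ds − ∫_0^t ∑_{i≥n} (2k_i/g_i) X_i(s)² ds. -/
open scoped BigOperators ENNReal
open MeasureTheory Filter Set Topology

/-- `kₙ = 2^{βn}`. -/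
noncomputable def kk (β : ℝ) (n : ℕ) : ℝ := (2 : ℝ) ^ (β * n)

/-- A weak solution of the dyadic model: `X 0 ≡ 0`, `X n 0 = x n`, and the ODE holds
for every `n ≥ 1` and `t ≥ 0` (the derivative being taken within `[0,∞)`). -/
def IsDyadicSolution (β : ℝ) (φ g : ℕ → ℝ) (x : ℕ → ℝ) (X : ℕ → ℝ → ℝ) : Prop :=
  (∀ t : ℝ, X 0 t = 0) ∧
  (∀ n : ℕ, 1 ≤ n → X n 0 = x n) ∧
  (∀ n : ℕ, 1 ≤ n → ∀ t : ℝ, 0 ≤ t →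
    HasDerivWithinAt (X n)
      (φ (n - 1) * kk β (n - 1) * (X (n - 1) t) ^ 2
        - φ n * kk β n * X n t * X (n + 1) t
        - kk β n / g n * X n t) (Set.Ici 0) t)

/-- The energy inequality at time `t`:
`∑_{n≥1} Xₙ(t)² + ∫_0^t ∑_{n≥1} (2kₙ/gₙ) Xₙ(s)² ds ≤ ∑_{n≥1} xₙ²`. -/
def EnergyIneqAt (β : ℝ) (g x : ℕ → ℝ) (X : ℕ → ℝ → ℝ) (t : ℝ) : Prop :=
  (∑' n : ℕ, ENNReal.ofReal ((X (n + 1) t) ^ 2))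
      + (∫⁻ s in Set.Ioc (0 : ℝ) t,
          ∑' n : ℕ, ENNReal.ofReal (2 * kk β (n + 1) / g (n + 1) * (X (n + 1) s) ^ 2))
    ≤ ∑' n : ℕ, ENNReal.ofReal ((x (n + 1)) ^ 2)

/-!
Multiplying the `n`-th equation by `2 Xₙ` shows that `Xₙ²` changes by the flux from mode `n - 1`,
minus the flux to mode `n + 1`, minus the dissipation. These balances are exact, and summed over the
first `m` modes all fluxes cancel except the one leaving mode `m`. Subtracting this finite identity
from the energy inequality, in which all the series converge, leaves the inequality for the tail.
-/

lemma summable_of_tsum_ofReal_ne_top {ι : Type*} {f : ι → ℝ} (hf : ∀ i, 0 ≤ f i)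
    (h : ∑' i, ENNReal.ofReal (f i) ≠ ∞) : Summable f := by
  simpa only [ENNReal.toReal_ofReal (hf _)] using ENNReal.summable_toReal h

lemma lintegral_tsum_ofReal {α ι : Type*} [Countable ι] [MeasurableSpace α] {μ : Measure α}
    {f : ι → α → ℝ} (hf_int : ∀ i, Integrable (f i) μ) (hf : ∀ i, 0 ≤ᵐ[μ] f i) :
    ∫⁻ a, ∑' i, ENNReal.ofReal (f i a) ∂μ = ∑' i, ENNReal.ofReal (∫ a, f i a ∂μ) := by
  rw [lintegral_tsum fun i => (hf_int i).aemeasurable.ennreal_ofReal]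
  exact tsum_congr fun i => (ofReal_integral_eq_lintegral_ofReal (hf_int i) (hf i)).symm

lemma integral_tsum_of_nonneg {α ι : Type*} [Countable ι] [MeasurableSpace α] {μ : Measure α}
    {f : ι → α → ℝ} (hf_int : ∀ i, Integrable (f i) μ) (hf : ∀ i, 0 ≤ᵐ[μ] f i)
    (hsum : Summable fun i => ∫ a, f i a ∂μ) :
    ∫ a, ∑' i, f i a ∂μ = ∑' i, ∫ a, f i a ∂μ := by
  refine (integral_tsum_of_summable_integral_norm hf_int (hsum.congr fun i => ?_)).symm
  exact integral_congr_ae ((hf i).mono fun a ha => (Real.norm_of_nonneg ha).symm)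

lemma integrableOn_Ioc_of_continuousOn_Ici {E : Type*} [NormedAddCommGroup E] {f : ℝ → E} {a b : ℝ}
    (hf : ContinuousOn f (Ici a)) : IntegrableOn f (Ioc a b) :=
  (hf.mono Icc_subset_Ici_self).integrableOn_Icc.mono_set Ioc_subset_Icc_self

lemma tsum_tail_add_le_of_balance {e d y A : ℕ → ℝ} (he : Summable e) (hd : Summable d)
    (hy : Summable y) (hbalance : ∀ i, e i + d i = y i + (A i - A (i + 1)))
    (htotal : ∑' i, e i + ∑' i, d i ≤ ∑' i, y i + A 0) (m : ℕ) :
    ∑' i, e (i + m) + ∑' i, d (i + m) ≤ ∑' i, y (i + m) + A m := by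
  have hhead : ∑ i ∈ Finset.range m, e i + ∑ i ∈ Finset.range m, d i
      = ∑ i ∈ Finset.range m, y i + (A 0 - A m) := by
    simp only [← Finset.sum_range_sub' A, ← Finset.sum_add_distrib, hbalance]
  linarith [he.sum_add_tsum_nat_add m, hd.sum_add_tsum_nat_add m, hy.sum_add_tsum_nat_add m]

/-- The rate `2 φₙ kₙ Xₙ² Xₙ₊₁` at which the nonlinear terms carry the energy `∑ Xᵢ²` from mode `n`
to mode `n + 1`. -/
noncomputable def energyFlux (β : ℝ) (φ : ℕ → ℝ) (X : ℕ → ℝ → ℝ) (n : ℕ) (s : ℝ) : ℝ :=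
  2 * φ n * kk β n * (X n s) ^ 2 * X (n + 1) s

/-- The rate `(2 kₙ / gₙ) Xₙ²` at which mode `n` dissipates the energy `∑ Xᵢ²`. -/
noncomputable def dissipation (β : ℝ) (g : ℕ → ℝ) (X : ℕ → ℝ → ℝ) (n : ℕ) (s : ℝ) : ℝ :=
  2 * kk β n / g n * (X n s) ^ 2

section Dyadic

variable {β : ℝ} {φ g x : ℕ → ℝ} {X : ℕ → ℝ → ℝ} {t : ℝ}

lemma dissipation_nonneg {n : ℕ} (hg : 0 ≤ g n) (s : ℝ) : 0 ≤ dissipation β g X n s := by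
  unfold dissipation kk
  positivity

namespace IsDyadicSolution

lemma energyFlux_zero (hsol : IsDyadicSolution β φ g x X) (s : ℝ) : energyFlux β φ X 0 s = 0 := by
  simp [energyFlux, hsol.1]

lemma continuousOn (hsol : IsDyadicSolution β φ g x X) (n : ℕ) : ContinuousOn (X n) (Ici 0) := by
  rcases Nat.eq_zero_or_pos n with rfl | hn
  · exact continuousOn_const.congr fun s _ => hsol.1 s
  · exact fun s hs => (hsol.2.2 n hn s hs).continuousWithinAt

lemma integrableOn_energyFlux (hsol : IsDyadicSolution β φ g x X) (n : ℕ) :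
    IntegrableOn (energyFlux β φ X n) (Ioc 0 t) := by
  have hn := hsol.continuousOn n
  have hsucc := hsol.continuousOn (n + 1)
  have hflux : ContinuousOn (energyFlux β φ X n) (Ici 0) := by
    unfold energyFlux
    fun_prop
  exact integrableOn_Ioc_of_continuousOn_Ici hflux

lemma integrableOn_dissipation (hsol : IsDyadicSolution β φ g x X) (n : ℕ) :
    IntegrableOn (dissipation β g X n) (Ioc 0 t) := by
  have hdiss : ContinuousOn (dissipation β g X n) (Ici 0) :=
    ((hsol.continuousOn n).pow 2).const_mul _
  exact integrableOn_Ioc_of_continuousOn_Ici hdiss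

lemma hasDerivWithinAt_sq (hsol : IsDyadicSolution β φ g x X) (n : ℕ) (ht : 0 ≤ t) :
    HasDerivWithinAt (fun s => X (n + 1) s ^ 2)
      (energyFlux β φ X n t - energyFlux β φ X (n + 1) t - dissipation β g X (n + 1) t)
      (Ici 0) t := by
  refine ((hsol.2.2 (n + 1) n.succ_pos t ht).pow 2).congr_deriv ?_
  simp only [energyFlux, dissipation, Nat.add_sub_cancel]
  push_cast
  ring

lemma sq_add_integral_dissipation (hsol : IsDyadicSolution β φ g x X) (n : ℕ) (ht : 0 ≤ t) :
    X (n + 1) t ^ 2 + ∫ s in Ioc 0 t, dissipation β g X (n + 1) s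
      = x (n + 1) ^ 2 + ((∫ s in Ioc 0 t, energyFlux β φ X n s)
        - ∫ s in Ioc 0 t, energyFlux β φ X (n + 1) s) := by
  have hin := hsol.integrableOn_energyFlux (t := t) n
  have hout := hsol.integrableOn_energyFlux (t := t) (n + 1)
  have hdiss := hsol.integrableOn_dissipation (t := t) (n + 1)
  have hnet : IntegrableOn (fun s => energyFlux β φ X n s - energyFlux β φ X (n + 1) s)
    (Ioc 0 t) := hin.sub hout
  have hFTC : ∫ s in Ioc 0 t, (energyFlux β φ X n s - energyFlux β φ X (n + 1) s
      - dissipation β g X (n + 1) s) = X (n + 1) t ^ 2 - x (n + 1) ^ 2 := by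
    rw [← intervalIntegral.integral_of_le ht, ← hsol.2.1 (n + 1) n.succ_pos]
    exact intervalIntegral.integral_eq_sub_of_hasDeriv_right_of_le ht
      (((hsol.continuousOn (n + 1)).pow 2).mono Icc_subset_Ici_self)
      (fun s hs => (hsol.hasDerivWithinAt_sq n hs.1.le).mono fun _ hu => (hs.1.trans hu).le)
      ((intervalIntegrable_iff_integrableOn_Ioc_of_le ht).2 (hnet.sub hdiss))
  rw [integral_sub hnet hdiss, integral_sub hin hout] at hFTC
  linarith

end IsDyadicSolution

lemma EnergyIneqAt.summable_and_tsum_le (hE : EnergyIneqAt β g x X t)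
    (hxH : Summable fun n : ℕ => x (n + 1) ^ 2)
    (hint : ∀ n : ℕ, IntegrableOn (dissipation β g X (n + 1)) (Ioc 0 t))
    (hg : ∀ n : ℕ, 1 ≤ n → 0 < g n) :
    (Summable fun n : ℕ => X (n + 1) t ^ 2) ∧
      (Summable fun n : ℕ => ∫ s in Ioc 0 t, dissipation β g X (n + 1) s) ∧
      ∑' n : ℕ, X (n + 1) t ^ 2 + ∑' n : ℕ, ∫ s in Ioc 0 t, dissipation β g X (n + 1) s
        ≤ ∑' n : ℕ, x (n + 1) ^ 2 := by
  have hdiss (n : ℕ) (s : ℝ) : 0 ≤ dissipation β g X (n + 1) s :=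
    dissipation_nonneg (hg (n + 1) n.succ_pos).le s
  have hX0 (n : ℕ) : 0 ≤ X (n + 1) t ^ 2 := sq_nonneg _
  have hD0 (n : ℕ) : 0 ≤ ∫ s in Ioc 0 t, dissipation β g X (n + 1) s := integral_nonneg (hdiss n)
  have hle : ∑' n : ℕ, ENNReal.ofReal (X (n + 1) t ^ 2)
        + ∑' n : ℕ, ENNReal.ofReal (∫ s in Ioc 0 t, dissipation β g X (n + 1) s)
      ≤ ∑' n : ℕ, ENNReal.ofReal (x (n + 1) ^ 2) := by
    rw [← lintegral_tsum_ofReal hint fun n => ae_of_all _ (hdiss n)]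
    exact hE
  have hfinite := ne_top_of_le_ne_top hxH.tsum_ofReal_ne_top hle
  have hX := summable_of_tsum_ofReal_ne_top hX0 (ENNReal.add_ne_top.1 hfinite).1
  have hD := summable_of_tsum_ofReal_ne_top hD0 (ENNReal.add_ne_top.1 hfinite).2
  refine ⟨hX, hD, ?_⟩
  rwa [← ENNReal.ofReal_tsum_of_nonneg hX0 hX, ← ENNReal.ofReal_tsum_of_nonneg hD0 hD,
    ← ENNReal.ofReal_tsum_of_nonneg (fun _ => sq_nonneg _) hxH,
    ← ENNReal.ofReal_add (tsum_nonneg hX0) (tsum_nonneg hD0),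
    ENNReal.ofReal_le_ofReal_iff (tsum_nonneg fun _ => sq_nonneg _)] at hle

theorem dyadic_tail_energy_inequality_general (hg : ∀ n : ℕ, 1 ≤ n → 0 < g n)
    (hxH : Summable fun n : ℕ => x (n + 1) ^ 2) (hsol : IsDyadicSolution β φ g x X)
    (ht : 0 ≤ t) (hE : EnergyIneqAt β g x X t) {n : ℕ} (hn : 1 ≤ n) :
    ∑' i : ℕ, X (n + i) t ^ 2
      ≤ ∑' i : ℕ, x (n + i) ^ 2
        + (∫ s in Ioc 0 t, 2 * φ (n - 1) * kk β (n - 1) * X (n - 1) s ^ 2 * X n s)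
        - ∫ s in Ioc 0 t, ∑' i : ℕ, 2 * kk β (n + i) / g (n + i) * X (n + i) s ^ 2 := by
  obtain ⟨m, rfl⟩ := Nat.exists_eq_add_of_le' hn
  have hint (i : ℕ) := hsol.integrableOn_dissipation (t := t) (i + 1)
  obtain ⟨hX, hD, htotal⟩ := hE.summable_and_tsum_le hxH hint hg
  have htail := tsum_tail_add_le_of_balance (A := fun i => ∫ s in Ioc 0 t, energyFlux β φ X i s)
    hX hD hxH (fun i => hsol.sq_add_integral_dissipation i ht)
    (by simpa only [hsol.energyFlux_zero, integral_zero, add_zero] using htotal) m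
  rw [← integral_tsum_of_nonneg (fun i => hint (i + m))
    (fun i => ae_of_all _ (dissipation_nonneg (hg _ (Nat.succ_pos _)).le))
    ((summable_nat_add_iff m).2 hD)] at htail
  have hindex (i : ℕ) : m + 1 + i = i + m + 1 := by omega
  simp only [hindex, Nat.add_sub_cancel]
  exact le_sub_iff_add_le.2 htail

end Dyadic

/-- Inequality (2.4): for a weak solution satisfying the energy inequality on `[0,T]`,
`Fₙ(t) ≤ Fₙ(0) + ∫_0^t 2φ_{n-1}k_{n-1}X_{n-1}²Xₙ ds − ∫_0^t ∑_{i≥n} (2kᵢ/gᵢ)Xᵢ² ds`. -/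
theorem dyadic_tail_energy_inequality
    (β : ℝ) (hβ : 0 < β) (φ g : ℕ → ℝ)
    (hφ : ∃ Φ : ℝ, ∀ n : ℕ, |φ n| ≤ Φ)
    (hgpos : ∀ n : ℕ, 1 ≤ n → 0 < g n)
    (T : ℝ) (hT : 0 < T)
    (x : ℕ → ℝ) (hxH : Summable fun n : ℕ => (x (n + 1)) ^ 2)
    (X : ℕ → ℝ → ℝ) (hsol : IsDyadicSolution β φ g x X)
    (hEI : ∀ t ∈ Set.Icc (0 : ℝ) T, EnergyIneqAt β g x X t) :
    ∀ n : ℕ, 1 ≤ n → ∀ t ∈ Set.Icc (0 : ℝ) T,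
      (∑' i : ℕ, (X (n + i) t) ^ 2)
        ≤ (∑' i : ℕ, (x (n + i)) ^ 2)
          + (∫ s in Set.Ioc (0 : ℝ) t,
              2 * φ (n - 1) * kk β (n - 1) * (X (n - 1) s) ^ 2 * X n s)
          - ∫ s in Set.Ioc (0 : ℝ) t,
              ∑' i : ℕ, 2 * kk β (n + i) / g (n + i) * (X (n + i) s) ^ 2 := by
  exact fun n hn t ht =>
    dyadic_tail_energy_inequality_general hgpos hxH hsol ht.1 (hEI t ht) hn
end

section
/- Suppose g is non-decreasing and ∑_{n≥1} g_n^{-1} = ∞. Let x ∈ H^s for some s>0 and let y be the bounding sequence for x. Then there exist an integer n_0 ≥ 1 and a real θ > 0 such that the sequence (n_k)_{k≥0} defined recursively by n_{k+1} = inf{ n ≥ n_k+2 : ∑_{j=n_k+2}^{n} g_j^{-1} ≥ 2^{-sk} θ } satisfies sup_{j ≥ n_k} y_j ≤ 2^{-2sk} for every k ≥ 0. -/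
open scoped BigOperators ENNReal
open MeasureTheory Filter Set Topology

/-- `x ∈ Hˢ`, i.e. `∑_{n≥1} 2^{2sn} xₙ² < ∞`. -/
def MemHs (s : ℝ) (x : ℕ → ℝ) : Prop :=
  Summable (fun n : ℕ => (2 : ℝ) ^ (2 * s * ((n : ℝ) + 1)) * (x (n + 1)) ^ 2)

/-- `‖φ‖_{ℓ^∞} = sup_{n≥1} |φₙ|`. -/
noncomputable def phiNorm (φ : ℕ → ℝ) : ℝ := ⨆ n : ℕ, |φ (n + 1)|

/-- For `gₙ, Φ, v > 0` this is exactly `Cₙ(v) = (1 + 1/((1/2) gₙ Φ v))⁻¹`. -/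
noncomputable def Cfun (Φ : ℝ) (g : ℕ → ℝ) (n : ℕ) (v : ℝ) : ℝ :=
  (g n * Φ * v / 2) / (1 + g n * Φ * v / 2)

/-- `∑_{i ≥ n} xᵢ²`. -/
noncomputable def tail2 (x : ℕ → ℝ) (n : ℕ) : ℝ := ∑' i : ℕ, (x (n + i)) ^ 2

/-- The bounding sequence for `x`: `y₁ = y₂ = 2‖x‖_H²` and
`y_{n+2} = C_{n+2}(√y_{n+1}) yₙ + ∑_{i ≥ n+2} xᵢ²`. -/
noncomputable def boundSeq (Φ : ℝ) (g x : ℕ → ℝ) : ℕ → ℝ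
  | 0 => 0
  | 1 => 2 * tail2 x 1
  | 2 => 2 * tail2 x 1
  | n + 3 =>
      Cfun Φ g (n + 3) (Real.sqrt (boundSeq Φ g x (n + 2))) * boundSeq Φ g x (n + 1)
        + tail2 x (n + 3)

/-! Two steps of the recursion multiply `yₙ` by at most `(1 + gₙ₊₂⁻¹ / (b v))⁻¹`, up to a geometric
error, where `v²` bounds the intermediate value and `b` is a constant. Along one parity class these
factors multiply to at most `(1 + S / (b v))⁻¹`, where `S` is the sum of `gⱼ⁻¹` over every other
index of the block; as `g⁻¹` is antitone, `S` is at least half of the sum over all indices. If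
`yⱼ ≤ 2^{-2sk}` from some index on, a block with `∑ gⱼ⁻¹ ≥ 2^{-sk} θ` thus gains the fixed factor
`O(1 / θ)`, the gain being scale invariant because `v = 2^{-sk}` too.

The parity class not containing `n_k` is started at `n_k - 1`, where only the bound of the previous
block is available. So each block is compared with the one two places before it, and `θ` is chosen
to gain the factor `2^{-4s}`. -/

section Sums

variable {𝕜 : Type*} [Field 𝕜] [LinearOrder 𝕜] [IsStrictOrderedRing 𝕜]

lemma le_div_one_add_sum_add_sum {z w ε : ℕ → 𝕜} (hz : 0 ≤ z 0) (hw : ∀ t, 0 ≤ w t)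
    (hε : ∀ t, 0 ≤ ε t) (hrec : ∀ t, z (t + 1) ≤ z t / (1 + w t) + ε t) (t : ℕ) :
    z t ≤ z 0 / (1 + ∑ i ∈ Finset.range t, w i) + ∑ i ∈ Finset.range t, ε i := by
  induction t with
  | zero => simp
  | succ t ih =>
    have hS : 0 ≤ ∑ i ∈ Finset.range t, w i := Finset.sum_nonneg fun i _ => hw i
    have hE : 0 ≤ ∑ i ∈ Finset.range t, ε i := Finset.sum_nonneg fun i _ => hε i
    have hwt := hw t
    rw [Finset.sum_range_succ, Finset.sum_range_succ]
    set S := ∑ i ∈ Finset.range t, w i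
    set E := ∑ i ∈ Finset.range t, ε i
    calc z (t + 1) ≤ (z 0 / (1 + S) + E) / (1 + w t) + ε t := (hrec t).trans (by gcongr)
      _ = z 0 / ((1 + S) * (1 + w t)) + E / (1 + w t) + ε t := by rw [add_div, div_div]
      _ ≤ z 0 / (1 + (S + w t)) + E + ε t := by
        gcongr
        · nlinarith [mul_nonneg hS hwt]
        · exact div_le_self hE (by linarith)
      _ = z 0 / (1 + (S + w t)) + (E + ε t) := add_assoc _ _ _

lemma sum_range_mul_pow_le {K q : ℝ} (hK : 0 ≤ K) (hq : 0 ≤ q) (hq1 : q < 1) (a t : ℕ) :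
    ∑ i ∈ Finset.range t, K * q ^ (a + 2 * i + 2) ≤ K / (1 - q) * q ^ a :=
  calc ∑ i ∈ Finset.range t, K * q ^ (a + 2 * i + 2)
      ≤ ∑ i ∈ Finset.range t, K * q ^ (a + i) := by
        refine Finset.sum_le_sum fun i _ => ?_
        gcongr K * ?_
        exact pow_le_pow_of_le_one hq hq1.le (by omega)
    _ = K * q ^ a * ∑ i ∈ Finset.range t, q ^ i := by simp only [Finset.mul_sum, pow_add, mul_assoc]
    _ ≤ K * q ^ a * (1 - q)⁻¹ := by
        rw [← tsum_geometric_of_lt_one hq hq1]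
        gcongr
        exact (summable_geometric_of_lt_one hq hq1).sum_le_tsum _ fun i _ => by positivity
    _ = K / (1 - q) * q ^ a := by ring

lemma sum_Icc_le_two_mul_sum_range {w : ℕ → 𝕜} {a : ℕ} (hw : AntitoneOn w (Ici (a + 2))) (t : ℕ) :
    ∑ j ∈ Finset.Icc (a + 2) (a + 2 * t + 1), w j
      ≤ 2 * ∑ i ∈ Finset.range t, w (a + 2 * i + 2) := by
  induction t with
  | zero => simp
  | succ t ih =>
    have hlast : w (a + 2 * t + 3) ≤ w (a + 2 * t + 2) :=
      hw (mem_Ici.2 (by omega)) (mem_Ici.2 (by omega)) (by omega)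
    rw [show a + 2 * (t + 1) + 1 = a + 2 * t + 1 + 1 + 1 by ring,
      Finset.sum_Icc_succ_top (by omega), Finset.sum_Icc_succ_top (by omega),
      Finset.sum_range_succ]
    linarith

lemma exists_le_sum_Icc_of_not_summable {w : ℕ → ℝ} {a : ℕ} (hw : ∀ n, a ≤ n → 0 ≤ w n)
    (hdiv : ¬ Summable w) (A : ℝ) : ∃ n, a ≤ n ∧ A ≤ ∑ j ∈ Finset.Icc a n, w j := by
  have hshift : ¬ Summable fun i => w (i + a) := mt (summable_nat_add_iff a).1 hdiv
  have htop := (not_summable_iff_tendsto_nat_atTop_of_nonneg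
    fun i => hw (i + a) (by omega)).1 hshift
  obtain ⟨t, ht⟩ := (htop.eventually_ge_atTop A).exists
  refine ⟨a + t, by omega, ht.trans ?_⟩
  calc ∑ i ∈ Finset.range t, w (i + a) = ∑ j ∈ Finset.Ico a (a + t), w j := by
        rw [Finset.sum_Ico_eq_sum_range, Nat.add_sub_cancel_left]
        simp only [add_comm]
    _ ≤ ∑ j ∈ Finset.Icc a (a + t), w j :=
        Finset.sum_le_sum_of_subset_of_nonneg Finset.Ico_subset_Icc_self fun j hj _ =>
          hw j (Finset.mem_Icc.1 hj).1

end Sums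

lemma exists_eq_add_two_mul_of_le {p m : ℕ} (h : p ≤ m) :
    ∃ a t, p ≤ a ∧ a ≤ p + 1 ∧ m = a + 2 * t :=
  ⟨p + (m - p) % 2, (m - p) / 2, by omega, by omega, by omega⟩

/-- The abstract form of the recursion for the bounding sequence, with weights `w = g⁻¹` and
geometric error `K qⁿ`. Quantifying over upper bounds `v > 0` for `√yₙ₊₁`, instead of dividing by
`√yₙ₊₁`, keeps the estimate meaningful where `yₙ₊₁ = 0`. -/
structure TwoStepDecay (y w : ℕ → ℝ) (b K q : ℝ) : Prop where
  nonneg : ∀ n, 0 ≤ y n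
  weight_pos : ∀ n, 1 ≤ n → 0 < w n
  weight_anti : AntitoneOn w (Ici 1)
  b_pos : 0 < b
  K_nonneg : 0 ≤ K
  q_pos : 0 < q
  q_lt_one : q < 1
  step : ∀ n v, 1 ≤ n → 0 < v → y (n + 1) ≤ v ^ 2 →
    y (n + 2) ≤ y n / (1 + w (n + 2) / (b * v)) + K * q ^ (n + 2)

namespace TwoStepDecay

variable {y w : ℕ → ℝ} {b K q : ℝ}

lemma error_const_nonneg (h : TwoStepDecay y w b K q) : 0 ≤ K / (1 - q) :=
  div_nonneg h.K_nonneg (sub_nonneg.2 h.q_lt_one.le)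

lemma error_le_error (h : TwoStepDecay y w b K q) {m n : ℕ} (hmn : m ≤ n) :
    K / (1 - q) * q ^ n ≤ K / (1 - q) * q ^ m :=
  mul_le_mul_of_nonneg_left (pow_le_pow_of_le_one h.q_pos.le h.q_lt_one.le hmn)
    h.error_const_nonneg

lemma tendsto_error (h : TwoStepDecay y w b K q) :
    Tendsto (fun n : ℕ => K / (1 - q) * q ^ n) atTop (𝓝 0) := by
  simpa using (tendsto_pow_atTop_nhds_zero_of_lt_one h.q_pos.le h.q_lt_one).const_mul (K / (1 - q))

lemma le_div_one_add_sum (h : TwoStepDecay y w b K q) {a : ℕ} (ha : 1 ≤ a) {v : ℝ} (hv : 0 < v)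
    (hy : ∀ j, a ≤ j → y j ≤ v ^ 2) (t : ℕ) :
    y (a + 2 * t) ≤ y a / (1 + (∑ i ∈ Finset.range t, w (a + 2 * i + 2)) / (b * v))
      + K / (1 - q) * q ^ a := by
  have hb := h.b_pos
  have hK := h.K_nonneg
  have hq := h.q_pos
  have hrec := le_div_one_add_sum_add_sum (z := fun t => y (a + 2 * t))
    (w := fun i => w (a + 2 * i + 2) / (b * v)) (ε := fun i => K * q ^ (a + 2 * i + 2))
    (h.nonneg a) (fun i => div_nonneg (h.weight_pos _ (by omega)).le (by positivity))
    (fun i => by positivity) (fun i => h.step (a + 2 * i) v (by omega) hv (hy _ (by omega))) t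
  rw [← Finset.sum_div] at hrec
  exact hrec.trans (add_le_add_right (sum_range_mul_pow_le hK hq.le h.q_lt_one a t) _)

lemma step_le_add (h : TwoStepDecay y w b K q) {n : ℕ} (hn : 1 ≤ n) :
    y (n + 2) ≤ y n + K * q ^ (n + 2) := by
  have hb := h.b_pos
  have hy := h.nonneg (n + 1)
  have hw := h.weight_pos (n + 2) (by omega)
  refine (h.step n (1 + y (n + 1)) hn (by positivity) (by nlinarith)).trans ?_
  gcongr
  exact div_le_self (h.nonneg n) (le_add_of_nonneg_right (by positivity))

lemma le_add_error (h : TwoStepDecay y w b K q) {a : ℕ} (ha : 1 ≤ a) (t : ℕ) :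
    y (a + 2 * t) ≤ y a + K / (1 - q) * q ^ a := by
  have hK := h.K_nonneg
  have hq := h.q_pos
  have hrec := le_div_one_add_sum_add_sum (z := fun t => y (a + 2 * t)) (w := fun _ => 0)
    (ε := fun i => K * q ^ (a + 2 * i + 2)) (h.nonneg a) (fun _ => le_rfl) (fun i => by positivity)
    (fun i => by rw [add_zero, div_one]; exact h.step_le_add (n := a + 2 * i) (by omega)) t
  simp only [Finset.sum_const_zero, add_zero, div_one] at hrec
  exact hrec.trans (add_le_add_right (sum_range_mul_pow_le hK hq.le h.q_lt_one a t) _)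

lemma exists_le_sq (h : TwoStepDecay y w b K q) : ∃ B, 0 < B ∧ ∀ j, 1 ≤ j → y j ≤ B ^ 2 := by
  have hy₁ := h.nonneg 1
  have hy₂ := h.nonneg 2
  have hL := h.error_const_nonneg
  refine ⟨1 + y 1 + y 2 + K / (1 - q), by positivity, fun j hj => ?_⟩
  obtain ⟨a, t, ha₁, ha₂, rfl⟩ := exists_eq_add_two_mul_of_le hj
  have hstart : y a ≤ y 1 + y 2 := by
    obtain rfl | rfl : a = 1 ∨ a = 2 := by omega
    all_goals linarith
  have herr : K / (1 - q) * q ^ a ≤ K / (1 - q) := by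
    simpa using h.error_le_error a.zero_le
  nlinarith [h.le_add_error ha₁ t]

lemma le_div_one_add (h : TwoStepDecay y w b K q) {p N m : ℕ} (hp : 1 ≤ p) (hpN : p ≤ N)
    (hNm : N ≤ m) {v c : ℝ} (hv : 0 < v) (hc : 0 ≤ c) (hy : ∀ j, p ≤ j → y j ≤ v ^ 2)
    (hsum : 2 * (b * v) * c ≤ ∑ j ∈ Finset.Icc (p + 3) N, w j) :
    y m ≤ v ^ 2 / (1 + c) + K / (1 - q) * q ^ p := by
  have hb := h.b_pos
  obtain ⟨a, t, hpa, hap, rfl⟩ := exists_eq_add_two_mul_of_le (hpN.trans hNm)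
  have hblock : ∑ j ∈ Finset.Icc (p + 3) N, w j
      ≤ 2 * ∑ i ∈ Finset.range t, w (a + 2 * i + 2) :=
    (Finset.sum_le_sum_of_subset_of_nonneg (Finset.Icc_subset_Icc (by omega) (by omega))
      fun j hj _ => (h.weight_pos j (by grind)).le).trans
    (sum_Icc_le_two_mul_sum_range (h.weight_anti.mono (Ici_subset_Ici.2 (by omega))) t)
  have hgain : c ≤ (∑ i ∈ Finset.range t, w (a + 2 * i + 2)) / (b * v) := by
    rw [le_div_iff₀ (by positivity)]
    linarith
  calc y (a + 2 * t)
      ≤ y a / (1 + (∑ i ∈ Finset.range t, w (a + 2 * i + 2)) / (b * v)) + K / (1 - q) * q ^ a :=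
        h.le_div_one_add_sum (hp.trans hpa) hv (fun j hj => hy j (hpa.trans hj)) t
    _ ≤ v ^ 2 / (1 + c) + K / (1 - q) * q ^ p := by
        gcongr ?_ / (1 + ?_) + ?_
        · exact hy a hpa
        · exact h.error_le_error hpa

lemma tendsto_zero (h : TwoStepDecay y w b K q) (hdiv : ¬ Summable w) :
    Tendsto y atTop (𝓝 0) := by
  refine tendsto_order.2 ⟨fun _ hc => .of_forall fun n => hc.trans_le (h.nonneg n), fun ε hε => ?_⟩
  obtain ⟨B, hB, hyB⟩ := h.exists_le_sq
  obtain ⟨p, herr, hp⟩ := ((h.tendsto_error.eventually_lt_const (half_pos hε)).and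
    (eventually_ge_atTop 1)).exists
  obtain ⟨N, hpN, hsum⟩ := exists_le_sum_Icc_of_not_summable (a := p + 3)
    (fun n hn => (h.weight_pos n (by omega)).le) hdiv (2 * (b * B) * (2 * B ^ 2 / ε))
  filter_upwards [eventually_ge_atTop N] with m hm
  have hym := h.le_div_one_add hp (by omega) hm hB (by positivity)
    (fun j hj => hyB j (hp.trans hj)) hsum
  have hmain : B ^ 2 / (1 + 2 * B ^ 2 / ε) ≤ ε / 2 := by
    rw [div_le_iff₀ (by positivity)]
    field_simp
    linarith
  linarith

section Scales

variable {r θ : ℝ}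

lemma le_pow_add_two (h : TwoStepDecay y w b K (r ^ 2)) (hr : 0 < r) {p₀ p N m k : ℕ}
    (hp₀ : 1 ≤ p₀) (herr : K / (1 - r ^ 2) * (r ^ 2) ^ p₀ ≤ (r ^ 2) ^ 2 / 2)
    (hθ : 4 * b ≤ θ * r ^ 5) (hp : p₀ + k ≤ p) (hpN : p ≤ N) (hNm : N ≤ m)
    (hy : ∀ j, p ≤ j → y j ≤ (r ^ 2) ^ k)
    (hsum : r ^ (k + 1) * θ ≤ ∑ j ∈ Finset.Icc (p + 3) N, w j) :
    y m ≤ (r ^ 2) ^ (k + 2) := by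
  have hscale : 2 * (b * r ^ k) * (2 / r ^ 4) ≤ r ^ (k + 1) * θ :=
    calc 2 * (b * r ^ k) * (2 / r ^ 4) = 4 * b * r ^ k / r ^ 4 := by ring
      _ ≤ θ * r ^ 5 * r ^ k / r ^ 4 := by gcongr
      _ = r ^ (k + 1) * θ := by field_simp; ring
  have hgain := h.le_div_one_add (v := r ^ k) (c := 2 / r ^ 4) (by omega) hpN hNm (by positivity)
    (by positivity) (fun j hj => (hy j hj).trans_eq (pow_right_comm r 2 k)) (hscale.trans hsum)
  have hmain : (r ^ k) ^ 2 / (1 + 2 / r ^ 4) ≤ (r ^ 2) ^ (k + 2) / 2 :=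
    calc (r ^ k) ^ 2 / (1 + 2 / r ^ 4) ≤ (r ^ k) ^ 2 / (2 / r ^ 4) := by gcongr; linarith
      _ = (r ^ 2) ^ (k + 2) / 2 := by field_simp; ring
  have herr' : K / (1 - r ^ 2) * (r ^ 2) ^ p ≤ (r ^ 2) ^ (k + 2) / 2 :=
    calc K / (1 - r ^ 2) * (r ^ 2) ^ p ≤ K / (1 - r ^ 2) * (r ^ 2) ^ (p₀ + k) :=
          h.error_le_error hp
      _ = K / (1 - r ^ 2) * (r ^ 2) ^ p₀ * (r ^ 2) ^ k := by rw [pow_add, mul_assoc]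
      _ ≤ (r ^ 2) ^ 2 / 2 * (r ^ 2) ^ k := by gcongr
      _ = (r ^ 2) ^ (k + 2) / 2 := by ring
  linarith

lemma le_pow_of_le_one (h : TwoStepDecay y w b K (r ^ 2)) (hr : 0 < r) {p : ℕ} (hp : 1 ≤ p)
    (hone : ∀ j, p ≤ j → y j ≤ 1) (herr : K / (1 - r ^ 2) * (r ^ 2) ^ p ≤ (r ^ 2) ^ 2 / 2)
    (hθ : 4 * b ≤ θ * r ^ 5) {n : ℕ → ℕ} (hn₀ : n 0 = p + 1)
    (hgap : ∀ k, n k + 2 ≤ n (k + 1))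
    (hsum : ∀ k, r ^ k * θ ≤ ∑ j ∈ Finset.Icc (n k + 2) (n (k + 1)), w j) (k : ℕ) :
    ∀ j, n k ≤ j → y j ≤ (r ^ 2) ^ k := by
  have hb := h.b_pos
  have hr1 : r ≤ 1 := ((sq_lt_one_iff₀ hr.le).1 h.q_lt_one).le
  have hθ0 : 0 < θ := pos_of_mul_pos_left (by linarith) (pow_pos hr 5).le
  have hgrow : ∀ k, p + 1 + k ≤ n k := by
    intro k
    induction k with
    | zero => omega
    | succ k ih => have := hgap k; omega
  induction k using Nat.twoStepInduction with
  | zero => intro j hj; simpa using hone j (by omega)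
  | one =>
    intro j hj
    have hsum₀ : r ^ (0 + 1) * θ ≤ ∑ j ∈ Finset.Icc (p + 3) (n 1), w j := by
      have := hsum 0
      rw [hn₀, pow_zero] at this
      exact this.trans' (by gcongr; simpa using hr1)
    have hgap₀ := hgap 0
    calc y j ≤ (r ^ 2) ^ (0 + 2) :=
          h.le_pow_add_two hr hp herr hθ le_rfl (by grind) hj (by simpa using hone) hsum₀
      _ ≤ (r ^ 2) ^ 1 := pow_le_pow_of_le_one (sq_nonneg r) h.q_lt_one.le (by omega)
  | more k ih _ =>
    intro j hj
    have hgap₀ := hgap k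
    have hgap₁ : n (k + 1) + 2 ≤ n (k + 2) := hgap (k + 1)
    have hgrow₀ := hgrow k
    obtain ⟨p', hp'⟩ : ∃ p', n (k + 1) = p' + 1 := ⟨n (k + 1) - 1, by omega⟩
    have hsum₁ := hsum (k + 1)
    rw [hp'] at hsum₁
    exact h.le_pow_add_two hr hp herr hθ (by omega) (by omega) hj
      (fun i hi => ih i (by omega)) hsum₁

theorem exists_forall_le_pow (h : TwoStepDecay y w b K (r ^ 2)) (hr : 0 < r)
    (hdiv : ¬ Summable w) :
    ∃ n₀ : ℕ, 1 ≤ n₀ ∧ ∃ θ : ℝ, 0 < θ ∧ ∀ n : ℕ → ℕ, n 0 = n₀ →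
      (∀ k, n k + 2 ≤ n (k + 1) ∧ r ^ k * θ ≤ ∑ j ∈ Finset.Icc (n k + 2) (n (k + 1)), w j) →
      ∀ k j, n k ≤ j → y j ≤ (r ^ 2) ^ k := by
  have hb := h.b_pos
  have hone : ∀ᶠ p in atTop, ∀ j, p ≤ j → y j ≤ 1 :=
    eventually_forall_ge_atTop.2 ((h.tendsto_zero hdiv).eventually_le_const one_pos)
  have herr : ∀ᶠ p in atTop, K / (1 - r ^ 2) * (r ^ 2) ^ p ≤ (r ^ 2) ^ 2 / 2 :=
    h.tendsto_error.eventually_le_const (by positivity)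
  obtain ⟨p, ⟨hpone, hperr⟩, hp⟩ := ((hone.and herr).and (eventually_ge_atTop 1)).exists
  refine ⟨p + 1, by omega, 4 * b / r ^ 5, by positivity, fun n hn₀ hn => ?_⟩
  exact h.le_pow_of_le_one hr hp hpone hperr (div_mul_cancel₀ _ (by positivity)).ge hn₀
    (fun k => (hn k).1) (fun k => (hn k).2)

end Scales

end TwoStepDecay

section BoundingSequence

/-- The squared norm `‖x‖_{Hˢ}² = ∑_{n≥1} 2^{2sn} xₙ²`; it is `0` unless `MemHs s x`. -/
noncomputable def hsNormSq (s : ℝ) (x : ℕ → ℝ) : ℝ :=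
  ∑' n : ℕ, (2 : ℝ) ^ (2 * s * ((n : ℝ) + 1)) * (x (n + 1)) ^ 2

lemma hsNormSq_nonneg (s : ℝ) (x : ℕ → ℝ) : 0 ≤ hsNormSq s x :=
  tsum_nonneg fun n => by positivity

lemma tail2_nonneg (x : ℕ → ℝ) (n : ℕ) : 0 ≤ tail2 x n :=
  tsum_nonneg fun _ => sq_nonneg _

lemma tail2_le_hsNormSq_mul {s : ℝ} (hs : 0 ≤ s) {x : ℕ → ℝ} (hx : MemHs s x) {n : ℕ}
    (hn : 1 ≤ n) : tail2 x n ≤ hsNormSq s x * (((2 : ℝ) ^ (-s)) ^ 2) ^ n := by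
  obtain ⟨n, rfl⟩ : ∃ m, n = m + 1 := ⟨n - 1, by omega⟩
  have hweight : (((2 : ℝ) ^ (-s)) ^ 2) ^ (n + 1) = ((2 : ℝ) ^ (2 * s * ((n : ℝ) + 1)))⁻¹ := by
    rw [← Real.rpow_neg zero_le_two, ← Real.rpow_mul_natCast zero_le_two,
      ← Real.rpow_mul_natCast zero_le_two]
    congr 1
    push_cast
    ring
  rw [hweight, ← div_eq_mul_inv, le_div_iff₀' (by positivity), tail2, ← tsum_mul_left]
  have hinj : Function.Injective fun i => n + i := add_right_injective n
  have hterm : ∀ i : ℕ, (2 : ℝ) ^ (2 * s * ((n : ℝ) + 1)) * x (n + 1 + i) ^ 2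
      ≤ (2 : ℝ) ^ (2 * s * (((n + i : ℕ) : ℝ) + 1)) * x (n + i + 1) ^ 2 := by
    intro i
    rw [add_right_comm n 1 i]
    gcongr
    · exact one_le_two
    · omega
  exact Summable.tsum_le_tsum_of_inj _ hinj (fun _ _ => by positivity) hterm
    (.of_nonneg_of_le (fun i => by positivity) hterm (hx.comp_injective hinj)) hx

lemma phiNorm_nonneg (φ : ℕ → ℝ) : 0 ≤ phiNorm φ :=
  Real.iSup_nonneg fun _ => abs_nonneg _

variable {Φ : ℝ} {g x : ℕ → ℝ}

lemma Cfun_nonneg (hΦ : 0 ≤ Φ) {n : ℕ} (hg : 0 < g n) {v : ℝ} (hv : 0 ≤ v) : 0 ≤ Cfun Φ g n v := by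
  unfold Cfun
  positivity

lemma Cfun_le_inv (hΦ : 0 ≤ Φ) {n : ℕ} (hg : 0 < g n) {u v b : ℝ} (hu : 0 ≤ u) (huv : u ≤ v)
    (hv : 0 < v) (hb : 0 < b) (hΦb : Φ / 2 ≤ b) :
    Cfun Φ g n u ≤ (1 + (g n)⁻¹ / (b * v))⁻¹ := by
  have harg : g n * Φ * u / 2 ≤ g n * b * v :=
    calc g n * Φ * u / 2 = g n * (Φ / 2) * u := by ring
      _ ≤ g n * b * v := by gcongr
  have hinv : (1 + (g n)⁻¹ / (b * v))⁻¹ = g n * b * v / (1 + g n * b * v) := by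
    field_simp
    ring
  rw [Cfun, hinv, div_le_div_iff₀ (by positivity) (by positivity)]
  linarith

lemma boundSeq_add_two (Φ : ℝ) (g x : ℕ → ℝ) {n : ℕ} (hn : 1 ≤ n) :
    boundSeq Φ g x (n + 2) =
      Cfun Φ g (n + 2) (√(boundSeq Φ g x (n + 1))) * boundSeq Φ g x n + tail2 x (n + 2) := by
  obtain ⟨n, rfl⟩ : ∃ m, n = m + 1 := ⟨n - 1, by omega⟩
  rw [boundSeq]

lemma boundSeq_nonneg (hΦ : 0 ≤ Φ) (hg : ∀ n, 1 ≤ n → 0 < g n) (x : ℕ → ℝ) (n : ℕ) :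
    0 ≤ boundSeq Φ g x n := by
  induction n using Nat.twoStepInduction with
  | zero => simp [boundSeq]
  | one => simpa [boundSeq] using tail2_nonneg x 1
  | more n ih _ =>
    rcases n with _ | n
    · simpa [boundSeq] using tail2_nonneg x 1
    · rw [boundSeq_add_two Φ g x (by omega)]
      exact add_nonneg (mul_nonneg (Cfun_nonneg hΦ (hg _ (by omega)) (Real.sqrt_nonneg _)) ih)
        (tail2_nonneg x _)

lemma twoStepDecay_boundSeq (hΦ : 0 ≤ Φ) (hgpos : ∀ n, 1 ≤ n → 0 < g n)
    (hgmono : MonotoneOn g (Ici 1)) {s : ℝ} (hs : 0 < s) (hx : MemHs s x) :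
    -- The summand `1` keeps `b` positive when `Φ = 0`.
    TwoStepDecay (boundSeq Φ g x) (fun n => (g n)⁻¹) (Φ / 2 + 1) (hsNormSq s x)
      (((2 : ℝ) ^ (-s)) ^ 2) where
  nonneg := boundSeq_nonneg hΦ hgpos x
  weight_pos n hn := inv_pos.2 (hgpos n hn)
  weight_anti m hm n hn hmn := inv_anti₀ (hgpos m hm) (hgmono hm hn hmn)
  b_pos := by positivity
  K_nonneg := hsNormSq_nonneg s x
  q_pos := by positivity
  q_lt_one := pow_lt_one₀ (by positivity)
    (Real.rpow_lt_one_of_one_lt_of_neg one_lt_two (neg_lt_zero.2 hs)) two_ne_zero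
  step n v hn hv hyv := by
    rw [boundSeq_add_two Φ g x hn, div_eq_inv_mul]
    have hC := Cfun_le_inv hΦ (hgpos (n + 2) (by omega)) (Real.sqrt_nonneg _)
      (Real.sqrt_le_iff.2 ⟨hv.le, hyv⟩) hv (b := Φ / 2 + 1) (by positivity) (by linarith)
    exact add_le_add (mul_le_mul_of_nonneg_right hC (boundSeq_nonneg hΦ hgpos x n))
      (tail2_le_hsNormSq_mul hs.le hx (by omega))

end BoundingSequence

/-- Lemma 3.6: there are `n₀ ≥ 1` and `θ > 0` such that along the subsequence
`n_{k+1} = inf{n ≥ n_k + 2 : ∑_{j=n_k+2}^n gⱼ⁻¹ ≥ 2^{-sk}θ}` one has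
`sup_{j ≥ n_k} yⱼ ≤ 2^{-2sk}`. -/
theorem boundSeq_subsequence_decay
    (β : ℝ) (hβ : 0 < β) (φ g : ℕ → ℝ)
    (hφbdd : BddAbove (Set.range fun n : ℕ => |φ (n + 1)|))
    (hgpos : ∀ n : ℕ, 1 ≤ n → 0 < g n)
    (hgmono : ∀ n m : ℕ, 1 ≤ n → n ≤ m → g n ≤ g m)
    (hgdiv : ¬ Summable fun n : ℕ => (g (n + 1))⁻¹)
    (s : ℝ) (hs : 0 < s) (x : ℕ → ℝ) (hx : MemHs s x) :
    ∃ n₀ : ℕ, 1 ≤ n₀ ∧ ∃ θ : ℝ, 0 < θ ∧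
      ∀ nseq : ℕ → ℕ, nseq 0 = n₀ →
        (∀ k : ℕ, nseq (k + 1) = sInf {n : ℕ | nseq k + 2 ≤ n ∧
            (2 : ℝ) ^ (-s * (k : ℝ)) * θ ≤ ∑ j ∈ Finset.Icc (nseq k + 2) n, (g j)⁻¹}) →
        ∀ k : ℕ, ∀ j : ℕ, nseq k ≤ j →
          boundSeq (phiNorm φ) g x j ≤ (2 : ℝ) ^ (-(2 * s) * (k : ℝ)) := by
  have hdecay := twoStepDecay_boundSeq (phiNorm_nonneg φ) hgpos
    (fun n hn m _ hnm => hgmono n m hn hnm) hs hx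
  have hdiv : ¬ Summable fun n => (g n)⁻¹ := mt (summable_nat_add_iff 1).2 hgdiv
  obtain ⟨n₀, hn₀, θ, hθ, hpow⟩ := hdecay.exists_forall_le_pow (by positivity) hdiv
  refine ⟨n₀, hn₀, θ, hθ, fun nseq h₀ hstep k j hj => ?_⟩
  have hblock : ∀ k, nseq k + 2 ≤ nseq (k + 1) ∧
      ((2 : ℝ) ^ (-s)) ^ k * θ ≤ ∑ j ∈ Finset.Icc (nseq k + 2) (nseq (k + 1)), (g j)⁻¹ := by
    intro k
    rw [hstep k, ← Real.rpow_mul_natCast zero_le_two]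
    exact Nat.sInf_mem (exists_le_sum_Icc_of_not_summable
      (fun n hn => (hdecay.weight_pos n (by omega)).le) hdiv _)
  calc boundSeq (phiNorm φ) g x j ≤ (((2 : ℝ) ^ (-s)) ^ 2) ^ k := hpow nseq h₀ hblock k j hj
    _ = (2 : ℝ) ^ (-(2 * s) * (k : ℝ)) := by
      rw [← Real.rpow_mul_natCast zero_le_two, ← Real.rpow_mul_natCast zero_le_two]
      congr 1
      push_cast
      ring
end
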